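/- For the elephant random walk on a Cayley graph that is the d-regular tree T_d (d ≥ 3): for any m ∈ [1, 2) there exists ε > 0 such that for all memory parameters p ∈ (1/d − ε, 1/d + ε) there is a constant c > 0 with E|Δ_n/n − (d − 2)/d|^m ≥ c · n^{−m/2} for all n ≥ 1. -/

import Mathlib

open MeasureTheory ProbabilityTheory Filter

noncomputable section

/-- The Cayley graph of a group with respect to a finite set of generators. -/
def cayleyGraph {G : Type*} [Group G] (S : Finset G) : SimpleGraph G where
  Adj x y := x ≠ y ∧ (y * x⁻¹ ∈ S ∨ x * y⁻¹ ∈ S)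
  symm := by
    constructor
    rintro x y ⟨h1, h2⟩
    refine ⟨h1.symm, ?_⟩
    rcases h2 with h | h
    · exact Or.inr h
    · exact Or.inl h
  loopless := ⟨fun x h => h.1 rfl⟩

/-- The elephant random walk (ERW) with memory parameter `p` on the Cayley graph of a
group `G` with respect to a symmetric generating set `S` of cardinality `d`, not
containing the identity, whose Cayley graph is a tree (hence the `d`-regular tree
`T_d`).  The steps are `g 1, g 2, …` (the value of `g 0` is irrelevant).  The law of
the process is characterised by: `g 1` is uniform on `S`, and, conditionally on the
first `n` steps being `s 1, …, s n`, the next step `g (n+1)` equals `a ∈ S` with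
probability `p * N/n + ((1-p)/(d-1)) * (n-N)/n`, where `N = #{1 ≤ k ≤ n : s k = a}`;
this is precisely the probability that the walker, recalling a uniform past epoch
`D ∈ {1, …, n}`, repeats `g D` with probability `p` and takes any given other step
with probability `(1-p)/(d-1)`. -/
structure ERW (G : Type*) [Group G] [DecidableEq G] (d : ℕ) (p : ℝ)
    (Ω : Type*) [MeasurableSpace Ω] (P : Measure Ω) where
  S : Finset G
  card_S : S.card = d
  symm_S : ∀ s ∈ S, s⁻¹ ∈ S
  one_not_mem : (1 : G) ∉ S
  tree : (cayleyGraph S).IsTree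
  g : ℕ → Ω → G
  meas_g : ∀ n a, MeasurableSet {ω | g n ω = a}
  mem_S : ∀ n, 1 ≤ n → ∀ ω, g n ω ∈ S
  init : ∀ a ∈ S, (P {ω | g 1 ω = a}).toReal = 1 / d
  update : ∀ n, 1 ≤ n → ∀ s : ℕ → G, ∀ a ∈ S,
    (P ({ω | ∀ k ∈ Finset.Icc 1 n, g k ω = s k} ∩ {ω | g (n + 1) ω = a})).toReal
      = (p * ((((Finset.Icc 1 n).filter fun k => s k = a).card : ℝ) / n)
          + (1 - p) / ((d : ℝ) - 1)
            * (((n : ℝ) - (((Finset.Icc 1 n).filter fun k => s k = a).card : ℝ)) / n))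
        * (P {ω | ∀ k ∈ Finset.Icc 1 n, g k ω = s k}).toReal

namespace ERW

variable {G : Type*} [Group G] [DecidableEq G] {d : ℕ} {p : ℝ}
  {Ω : Type*} [MeasurableSpace Ω] {P : Measure Ω}

/-- The position `w n = g n ⋯ g 1` of the walk at time `n`. -/
def pos (E : ERW G d p Ω P) : ℕ → Ω → G
  | 0 => fun _ => 1
  | n + 1 => fun ω => E.g (n + 1) ω * E.pos n ω

/-- `Δ n`: the (word-metric) distance of the walker from the root at time `n`. -/
def dist (E : ERW G d p Ω P) (n : ℕ) (ω : Ω) : ℕ :=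
  (cayleyGraph E.S).dist 1 (E.pos n ω)

/-- `N n a`: the number of `a`-steps taken by time `n`. -/
def count (E : ERW G d p Ω P) (a : G) (n : ℕ) (ω : Ω) : ℕ :=
  ((Finset.Icc 1 n).filter fun k => E.g k ω = a).card

/-- `γ n`: the unique step decreasing the distance to the root by 1
(a junk value if the walker is at the root). -/
def gammaStep (E : ERW G d p Ω P) (n : ℕ) (ω : Ω) : G :=
  @Classical.epsilon G ⟨1⟩ fun s =>
    s ∈ E.S ∧ (cayleyGraph E.S).dist 1 (s * E.pos n ω) + 1 = E.dist n ω

/-- `ℓ n = N n (γ n)` if the walker is away from the root, and `0` otherwise. -/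
def ell (E : ERW G d p Ω P) (n : ℕ) (ω : Ω) : ℕ :=
  if E.pos n ω = 1 then 0 else E.count (E.gammaStep n ω) n ω

/-- `Ξ n = (1/n) ∑_{k=0}^{n-1} (ℓ k / k - 1(Δ k > 0)/d)` (with the convention
`ℓ 0 / 0 = 0`, automatic since division by zero yields zero). -/
def Xi (E : ERW G d p Ω P) (n : ℕ) (ω : Ω) : ℝ :=
  (1 / n) * ∑ k ∈ Finset.range n,
    ((E.ell k ω : ℝ) / k - (if 0 < E.dist k ω then 1 else 0) / d)

/-- The natural filtration `F n` generated by the steps up to time `n`. -/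
def filt (E : ERW G d p Ω P) (n : ℕ) : MeasurableSpace Ω :=
  ⨆ k ∈ Finset.Icc 1 n, MeasurableSpace.comap (E.g k) ⊤

/-- `G n = E[Δ (n+1) - Δ n | F n]`. -/
def drift (E : ERW G d p Ω P) (n : ℕ) : Ω → ℝ :=
  P[fun ω => ((E.dist (n + 1) ω : ℝ) - (E.dist n ω : ℝ)) | E.filt n]

/-- The martingale differences `Y k = Δ k - Δ (k-1) - G (k-1)`. -/
def mdiff (E : ERW G d p Ω P) (k : ℕ) (ω : Ω) : ℝ :=
  (E.dist k ω : ℝ) - (E.dist (k - 1) ω : ℝ) - E.drift (k - 1) ω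

/-- The martingale `M n = ∑_{k=1}^n Y k`. -/
def mart (E : ERW G d p Ω P) (n : ℕ) (ω : Ω) : ℝ :=
  ∑ k ∈ Finset.Icc 1 n, E.mdiff k ω

end ERW

/-- The rate `r n`: `√n` in the subcritical regime `p < p_d = (d+1)/(2d)`,
`√(n / log n)` in the critical regime `p = p_d`, and `n ^ (d(1-p)/(d-1))` in the
supercritical regime `p > p_d`. -/
def rate (p : ℝ) (d : ℕ) (n : ℕ) : ℝ :=
  if p < ((d : ℝ) + 1) / (2 * d) then Real.sqrt n
  else if p = ((d : ℝ) + 1) / (2 * d) then Real.sqrt ((n : ℝ) / Real.log n)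
  else (n : ℝ) ^ ((d : ℝ) * (1 - p) / ((d : ℝ) - 1))

/-!
By Doob's decomposition `Δ n - n * (d - 2) / d = M n + B n + β * R n`, where `M` is a martingale,
`B` is nondecreasing (the drift is larger at the root, from which every step leads away), `R`
accumulates the influence of the memory, and `β` is proportional to `p - 1 / d`.

The conditional variance of `M` degenerates only at the root, so `E (M n) ^ 2` is of order `n`,
while `E (M n) ^ 4` is at most of order `n ^ 2`; hence `E |M n|` is at least of order `√n`. The
numbers of uses of each generator deviate diffusively from their average `n / d`, so `E |R n|` is
at most of order `√n`. Since `M n` is centred, half of `E |M n|` comes from the event `M n > 0`,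
where `B n ≥ 0` cannot cancel it: `E |M n + B n + β * R n| ≥ E |M n| / 2 - |β| * E |R n|`, which
is of order `√n` once `|β|` is small. Jensen's inequality passes from the first to the `m`-th
moment.
-/

section RealInequalities

lemma sq_le_mul_add_pow_four_div {x t : ℝ} (hx : 0 ≤ x) (ht : 0 < t) :
    x ^ 2 ≤ t * x + x ^ 4 / t ^ 2 := by
  rcases le_total x t with hxt | htx
  · have : 0 ≤ x ^ 4 / t ^ 2 := by positivity
    nlinarith
  · have : x ^ 2 ≤ x ^ 4 / t ^ 2 := by
      rw [le_div_iff₀ (by positivity)]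
      calc x ^ 2 * t ^ 2 ≤ x ^ 2 * x ^ 2 := by gcongr
        _ = x ^ 4 := by ring
    have : 0 ≤ t * x := by positivity
    linarith

lemma add_pow_four_le {x y K : ℝ} (hy : |y| ≤ K) :
    (x + y) ^ 4 ≤ x ^ 4 + 8 * K ^ 2 * x ^ 2 + 3 * K ^ 4 + 4 * x ^ 3 * y := by
  have hyK : y ^ 2 ≤ K ^ 2 := sq_le_sq' (abs_le.1 hy).1 (abs_le.1 hy).2
  calc (x + y) ^ 4
      = x ^ 4 + 4 * x ^ 3 * y + 6 * x ^ 2 * y ^ 2 + 2 * (2 * x * y) * y ^ 2 + (y ^ 2) ^ 2 := by ring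
    _ ≤ x ^ 4 + 4 * x ^ 3 * y + 6 * x ^ 2 * y ^ 2 + 2 * (x ^ 2 + y ^ 2) * y ^ 2 + (y ^ 2) ^ 2 := by
        gcongr; exact two_mul_le_add_sq x y
    _ = x ^ 4 + 4 * x ^ 3 * y + 8 * x ^ 2 * y ^ 2 + 3 * (y ^ 2) ^ 2 := by ring
    _ ≤ x ^ 4 + 4 * x ^ 3 * y + 8 * x ^ 2 * K ^ 2 + 3 * (K ^ 2) ^ 2 := by gcongr
    _ = _ := by ring

lemma abs_add_self_sub_le {x b r : ℝ} (hb : 0 ≤ b) : |x| + x - 2 * |r| ≤ 2 * |x + b + r| := by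
  have hsum : x + b + r ≤ |x + b + r| := le_abs_self _
  have hr : -|r| ≤ r := neg_abs_le r
  rcases abs_cases x with ⟨hx, -⟩ | ⟨hx, -⟩
  · linarith
  · linarith [abs_nonneg (x + b + r), abs_nonneg r]

lemma sum_range_inv_sqrt_le (n : ℕ) : ∑ k ∈ Finset.range (n + 1), (√k)⁻¹ ≤ 2 * √n := by
  induction n with
  | zero => simp
  | succ n ih =>
    have hv : 0 < √((n + 1 : ℕ) : ℝ) := by positivity
    have hgap : (√((n + 1 : ℕ) : ℝ))⁻¹ ≤ 2 * √((n + 1 : ℕ) : ℝ) - 2 * √n := by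
      rw [inv_le_iff_one_le_mul₀ hv]
      have hu2 : √(n : ℝ) ^ 2 = n := Real.sq_sqrt n.cast_nonneg
      have hv2 : √((n + 1 : ℕ) : ℝ) ^ 2 = n + 1 := by rw [Real.sq_sqrt (by positivity)]; simp
      nlinarith [sq_nonneg (√((n + 1 : ℕ) : ℝ) - √n)]
    rw [Finset.sum_range_succ]
    linarith

end RealInequalities

section FiniteValued

variable {Ω β : Type*} [MeasurableSpace Ω] {P : Measure Ω} {X : Ω → β}

lemma integrable_comp_of_finite_range [IsFiniteMeasure P] (hX : ∀ b, MeasurableSet {ω | X ω = b})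
    (hfin : (Set.range X).Finite) (Φ : β → ℝ) : Integrable (fun ω => Φ (X ω)) P :=
  ((⟨X, hX, hfin⟩ : SimpleFunc Ω β).map Φ).integrable_of_isFiniteMeasure

lemma integral_comp_eq_sum [IsFiniteMeasure P] (hX : ∀ b, MeasurableSet {ω | X ω = b})
    {T : Finset β} (hT : ∀ ω, X ω ∈ T) (Φ : β → ℝ) :
    ∫ ω, Φ (X ω) ∂P = ∑ b ∈ T, P.real {ω | X ω = b} * Φ b := by
  classical
  have hsum (ω : Ω) : Φ (X ω) = ∑ b ∈ T, {ω | X ω = b}.indicator (fun _ => Φ b) ω := by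
    simp only [Set.indicator_apply, Set.mem_ofPred_eq]
    rw [Finset.sum_ite_eq, if_pos (hT ω)]
  simp_rw [hsum]
  rw [integral_finsetSum _ fun b _ => (integrable_const _).indicator (hX b)]
  simp_rw [integral_indicator_const _ (hX _), smul_eq_mul]

end FiniteValued

section Moments

variable {Ω : Type*} [MeasurableSpace Ω] {P : Measure Ω} {X : Ω → ℝ}

lemma rpow_integral_abs_le [IsProbabilityMeasure P] {m : ℝ} (hm : 1 ≤ m) (hX : Integrable X P)
    (hXm : Integrable (fun ω => |X ω| ^ m) P) : (∫ ω, |X ω| ∂P) ^ m ≤ ∫ ω, |X ω| ^ m ∂P :=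
  (convexOn_rpow hm).map_integral_le (Real.continuous_rpow_const (by linarith)).continuousOn
    isClosed_Ici (ae_of_all _ fun _ => Set.mem_Ici.2 (abs_nonneg _)) hX.abs hXm

lemma integral_abs_le_sqrt [IsProbabilityMeasure P] {v : ℝ} (hX : Integrable X P)
    (hX2 : Integrable (fun ω => X ω ^ 2) P) (hv : ∫ ω, X ω ^ 2 ∂P ≤ v) :
    ∫ ω, |X ω| ∂P ≤ √v := by
  refine Real.le_sqrt_of_sq_le (le_trans ?_ hv)
  simpa using rpow_integral_abs_le one_le_two hX (by simpa using hX2)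

lemma integral_sq_le_mul_integral_abs_add {t : ℝ} (ht : 0 < t) (hX : Integrable X P)
    (hX2 : Integrable (fun ω => X ω ^ 2) P) (hX4 : Integrable (fun ω => X ω ^ 4) P) :
    ∫ ω, X ω ^ 2 ∂P ≤ t * ∫ ω, |X ω| ∂P + (∫ ω, X ω ^ 4 ∂P) / t ^ 2 := by
  rw [← integral_const_mul, ← integral_div,
    ← integral_add (hX.abs.const_mul t) (hX4.div_const _)]
  refine integral_mono hX2 ((hX.abs.const_mul t).add (hX4.div_const _)) fun ω => ?_
  simpa [Even.pow_abs (by decide : Even 4)] using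
    sq_le_mul_add_pow_four_div (abs_nonneg (X ω)) ht

end Moments

section HistoryProcess

variable {α : Type*}

/-- The additive functional of a word read from its last letter to its first: the sum of
`f L a` over the decompositions of the word as `⋯ ++ a :: L`. With words growing at the head, this
is the process with increments `f (history) (next letter)`. -/
def pathSum (f : List α → α → ℝ) : List α → ℝ
  | [] => 0
  | a :: L => pathSum f L + f L a

lemma pathSum_nonneg {f : List α → α → ℝ} (hf : ∀ L a, 0 ≤ f L a) (L : List α) :
    0 ≤ pathSum f L := by
  induction L with
  | nil => exact le_rfl
  | cons a L ih => exact add_nonneg ih (hf L a)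

variable [Fintype α]

/-- The conditional mean of `f` evaluated at the next letter, given the history `L`. -/
def stepMean (q f : List α → α → ℝ) (L : List α) : ℝ := ∑ a, q L a * f L a

/-- The increments `f` minus their conditional mean: the martingale differences of Doob's
decomposition of `pathSum f`. -/
def compensated (q f : List α → α → ℝ) (L : List α) (a : α) : ℝ := f L a - stepMean q f L

/-- The conditional variance of the next increment of `pathSum f`, given the history `L`. -/
def stepVar (q f : List α → α → ℝ) (L : List α) : ℝ :=
  stepMean q (fun L a => compensated q f L a ^ 2) L

/-- `H n` is the word of the first `n` letters (most recent letter first) of a random sequence over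
a finite alphabet whose next letter, given the history `L`, has law `q L`. -/
structure IsHistoryProcess {Ω : Type*} [MeasurableSpace Ω] (q : List α → α → ℝ)
    (H : ℕ → Ω → List α) (P : Measure Ω) : Prop where
  mem_stdSimplex : ∀ L, q L ∈ stdSimplex ℝ α
  measurableSet_eq : ∀ n L, MeasurableSet {ω | H n ω = L}
  zero : ∀ ω, H 0 ω = []
  succ : ∀ n ω, ∃ a, H (n + 1) ω = a :: H n ω
  transition : ∀ n a L, P.real {ω | H (n + 1) ω = a :: L} = q L a * P.real {ω | H n ω = L}

section StepMean

variable {q f g : List α → α → ℝ} {L : List α}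

lemma stepMean_predictable (hq : q L ∈ stdSimplex ℝ α) (r : List α → ℝ) :
    stepMean q (fun L _ => r L) L = r L := by
  rw [stepMean, ← Finset.sum_mul, hq.2, one_mul]

lemma stepMean_mono (hq : q L ∈ stdSimplex ℝ α) (hfg : ∀ a, f L a ≤ g L a) :
    stepMean q f L ≤ stepMean q g L :=
  Finset.sum_le_sum fun a _ => mul_le_mul_of_nonneg_left (hfg a) (hq.1 a)

lemma abs_stepMean_le {K : ℝ} (hq : q L ∈ stdSimplex ℝ α) (hf : ∀ a, |f L a| ≤ K) :
    |stepMean q f L| ≤ K := by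
  rw [← stepMean_predictable hq fun _ => K, abs_le, ← neg_le]
  have hneg : -stepMean q f L = stepMean q (fun L a => -f L a) L := by simp [stepMean]
  rw [hneg]
  exact ⟨stepMean_mono hq fun a => neg_le.1 (abs_le.1 (hf a)).1,
    stepMean_mono hq fun a => (abs_le.1 (hf a)).2⟩

lemma stepMean_compensated (hq : q L ∈ stdSimplex ℝ α) : stepMean q (compensated q f) L = 0 := by
  simp only [stepMean, compensated, mul_sub, Finset.sum_sub_distrib, ← Finset.sum_mul, hq.2]
  ring

lemma abs_compensated_le {K : ℝ} (hq : q L ∈ stdSimplex ℝ α) (hf : ∀ a, |f L a| ≤ K) (a : α) :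
    |compensated q f L a| ≤ 2 * K :=
  calc |f L a - stepMean q f L| ≤ |f L a| + |stepMean q f L| := abs_sub _ _
    _ ≤ 2 * K := by linarith [hf a, abs_stepMean_le hq hf]

lemma stepVar_nonneg (hq : q L ∈ stdSimplex ℝ α) : 0 ≤ stepVar q f L :=
  Finset.sum_nonneg fun a _ => mul_nonneg (hq.1 a) (sq_nonneg _)

/-- Whatever the conditional mean `μ` is, `(1 - μ) ^ 2 + (-1 - μ) ^ 2 ≥ 2`. -/
lemma two_mul_le_stepVar {δ : ℝ} {a b : α} (hq : q L ∈ stdSimplex ℝ α) (hδ : 0 ≤ δ)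
    (hqa : δ ≤ q L a) (hqb : δ ≤ q L b) (hfa : f L a = 1) (hfb : f L b = -1) :
    2 * δ ≤ stepVar q f L := by
  classical
  have hab : a ≠ b := by rintro rfl; linarith
  set μ := stepMean q f L
  calc 2 * δ ≤ δ * (1 - μ) ^ 2 + δ * (-1 - μ) ^ 2 := by nlinarith [mul_nonneg hδ (sq_nonneg μ)]
    _ ≤ q L a * (1 - μ) ^ 2 + q L b * (-1 - μ) ^ 2 := by gcongr
    _ = ∑ c ∈ {a, b}, q L c * compensated q f L c ^ 2 := by
        rw [Finset.sum_pair hab, compensated, compensated, hfa, hfb]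
    _ ≤ stepVar q f L := Finset.sum_le_sum_of_subset_of_nonneg (Finset.subset_univ _)
        fun c _ _ => mul_nonneg (hq.1 c) (sq_nonneg _)

lemma stepMean_pathSum_cons_sq (hq : q L ∈ stdSimplex ℝ α) (hf : stepMean q f L = 0) :
    stepMean q (fun L a => pathSum f (a :: L) ^ 2) L =
      pathSum f L ^ 2 + stepMean q (fun L a => f L a ^ 2) L := by
  have hexp (a : α) : q L a * (pathSum f L + f L a) ^ 2 =
      q L a * pathSum f L ^ 2 + 2 * pathSum f L * (q L a * f L a) + q L a * f L a ^ 2 := by ring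
  simp only [stepMean] at hf
  simp only [stepMean, pathSum, hexp, Finset.sum_add_distrib, ← Finset.sum_mul, ← Finset.mul_sum,
    hq.2, hf]
  ring

lemma stepMean_pathSum_cons_pow_four_le {K : ℝ} (hq : q L ∈ stdSimplex ℝ α)
    (hf : stepMean q f L = 0) (hK : ∀ a, |f L a| ≤ K) :
    stepMean q (fun L a => pathSum f (a :: L) ^ 4) L ≤
      pathSum f L ^ 4 + 8 * K ^ 2 * pathSum f L ^ 2 + 3 * K ^ 4 := by
  set x := pathSum f L
  calc stepMean q (fun L a => pathSum f (a :: L) ^ 4) L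
      ≤ ∑ a, q L a * (x ^ 4 + 8 * K ^ 2 * x ^ 2 + 3 * K ^ 4 + 4 * x ^ 3 * f L a) :=
        Finset.sum_le_sum fun a _ =>
          mul_le_mul_of_nonneg_left (add_pow_four_le (hK a)) (hq.1 a)
    _ = (∑ a, q L a) * (x ^ 4 + 8 * K ^ 2 * x ^ 2 + 3 * K ^ 4)
          + 4 * x ^ 3 * stepMean q f L := by
        rw [stepMean, Finset.sum_mul, Finset.mul_sum, ← Finset.sum_add_distrib]
        exact Finset.sum_congr rfl fun a _ => by ring
    _ = _ := by rw [hq.2, hf]; ring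

end StepMean

namespace IsHistoryProcess

variable {Ω : Type*} [MeasurableSpace Ω] {P : Measure Ω} {q f : List α → α → ℝ}
  {H : ℕ → Ω → List α}

lemma length_eq (hH : IsHistoryProcess q H P) (n : ℕ) (ω : Ω) : (H n ω).length = n := by
  induction n with
  | zero => simp [hH.zero]
  | succ n ih =>
    obtain ⟨a, ha⟩ := hH.succ n ω
    simp [ha, ih]

lemma finite_range (hH : IsHistoryProcess q H P) (n : ℕ) : (Set.range (H n)).Finite :=
  (List.finite_length_eq α n).subset (Set.range_subset_iff.2 (hH.length_eq n))

lemma integrable_comp [IsFiniteMeasure P] (hH : IsHistoryProcess q H P) (n : ℕ)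
    (Φ : List α → ℝ) : Integrable (fun ω => Φ (H n ω)) P :=
  integrable_comp_of_finite_range (hH.measurableSet_eq n) (hH.finite_range n) Φ

lemma integral_comp_succ [IsFiniteMeasure P] (hH : IsHistoryProcess q H P) (n : ℕ)
    (Φ : List α → ℝ) :
    ∫ ω, Φ (H (n + 1) ω) ∂P = ∫ ω, stepMean q (fun L a => Φ (a :: L)) (H n ω) ∂P := by
  classical
  set T : Finset (List α) := (hH.finite_range n).toFinset with hT
  have hmem (ω : Ω) : H n ω ∈ T := by simp [hT]
  have hmem_succ (ω : Ω) : H (n + 1) ω ∈ (T ×ˢ Finset.univ).image fun x => x.2 :: x.1 := by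
    obtain ⟨a, ha⟩ := hH.succ n ω
    exact Finset.mem_image.2 ⟨(H n ω, a), by simp [hmem], ha.symm⟩
  have hinj : Set.InjOn (fun x : List α × α => x.2 :: x.1)
      ((T ×ˢ Finset.univ : Finset (List α × α)) : Set (List α × α)) := by
    rintro ⟨L, a⟩ - ⟨L', a'⟩ - h
    simp_all
  rw [integral_comp_eq_sum (hH.measurableSet_eq _) hmem_succ, Finset.sum_image hinj,
    Finset.sum_product, integral_comp_eq_sum (hH.measurableSet_eq n) hmem]
  refine Finset.sum_congr rfl fun L _ => ?_
  rw [stepMean, Finset.mul_sum]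
  exact Finset.sum_congr rfl fun a _ => by rw [hH.transition]; ring

lemma integral_comp_succ_le [IsFiniteMeasure P] (hH : IsHistoryProcess q H P) (n : ℕ)
    {Φ Ψ : List α → ℝ} (h : ∀ ω, stepMean q (fun L a => Φ (a :: L)) (H n ω) ≤ Ψ (H n ω)) :
    ∫ ω, Φ (H (n + 1) ω) ∂P ≤ ∫ ω, Ψ (H n ω) ∂P := by
  rw [hH.integral_comp_succ]
  exact integral_mono (hH.integrable_comp n _) (hH.integrable_comp n Ψ) h

lemma integral_abs_pathSum_predictable_le [IsFiniteMeasure P] (hH : IsHistoryProcess q H P)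
    (r : List α → ℝ) (n : ℕ) :
    ∫ ω, |pathSum (fun L _ => r L) (H n ω)| ∂P ≤ ∑ k ∈ Finset.range n, ∫ ω, |r (H k ω)| ∂P := by
  induction n with
  | zero => simp [hH.zero, pathSum]
  | succ n ih =>
    have hstep : ∫ ω, |pathSum (fun L _ => r L) (H (n + 1) ω)| ∂P ≤
        ∫ ω, (|pathSum (fun L _ => r L) (H n ω)| + |r (H n ω)|) ∂P :=
      hH.integral_comp_succ_le n (Φ := fun L => |pathSum (fun L _ => r L) L|)
        (Ψ := fun L => |pathSum (fun L _ => r L) L| + |r L|) fun ω =>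
        (stepMean_predictable (hH.mem_stdSimplex _)
          fun L => |pathSum (fun L _ => r L) L + r L|).trans_le (abs_add_le _ _)
    rw [integral_add (hH.integrable_comp n _).abs (hH.integrable_comp n r).abs] at hstep
    rw [Finset.sum_range_succ]
    linarith

lemma integral_pathSum_eq_zero [IsFiniteMeasure P] (hH : IsHistoryProcess q H P)
    (hf : ∀ L, stepMean q f L = 0) (n : ℕ) : ∫ ω, pathSum f (H n ω) ∂P = 0 := by
  induction n with
  | zero => simp [hH.zero, pathSum]
  | succ n ih =>
    rw [hH.integral_comp_succ, ← ih]
    congr 1 with ω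
    have hq := (hH.mem_stdSimplex (H n ω)).2
    have hf := hf (H n ω)
    simp only [stepMean] at hf
    simp only [stepMean, pathSum, mul_add, Finset.sum_add_distrib, ← Finset.sum_mul, hq, hf]
    ring

lemma integral_pathSum_succ_sq [IsFiniteMeasure P] (hH : IsHistoryProcess q H P)
    (hf : ∀ L, stepMean q f L = 0) (n : ℕ) :
    ∫ ω, pathSum f (H (n + 1) ω) ^ 2 ∂P =
      ∫ ω, pathSum f (H n ω) ^ 2 ∂P + ∫ ω, stepMean q (fun L a => f L a ^ 2) (H n ω) ∂P := by
  rw [hH.integral_comp_succ n fun L => pathSum f L ^ 2,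
    ← integral_add (hH.integrable_comp n fun L => pathSum f L ^ 2) (hH.integrable_comp n _)]
  congr 1 with ω
  exact stepMean_pathSum_cons_sq (hH.mem_stdSimplex _) (hf _)

section ProbabilityMeasure

variable [IsProbabilityMeasure P]

lemma integral_pathSum_sq_le {K : ℝ} (hH : IsHistoryProcess q H P)
    (hf : ∀ L, stepMean q f L = 0) (hK : ∀ L a, |f L a| ≤ K) (n : ℕ) :
    ∫ ω, pathSum f (H n ω) ^ 2 ∂P ≤ K ^ 2 * n := by
  induction n with
  | zero => simp [hH.zero, pathSum]
  | succ n ih =>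
    have hvar : ∫ ω, stepMean q (fun L a => f L a ^ 2) (H n ω) ∂P ≤ ∫ _, K ^ 2 ∂P := by
      refine integral_mono (hH.integrable_comp n _) (integrable_const _) fun ω => ?_
      rw [← stepMean_predictable (hH.mem_stdSimplex (H n ω)) fun _ => K ^ 2]
      exact stepMean_mono (hH.mem_stdSimplex _) fun a =>
        sq_le_sq' (abs_le.1 (hK _ a)).1 (abs_le.1 (hK _ a)).2
    rw [integral_const, probReal_univ, one_smul] at hvar
    rw [hH.integral_pathSum_succ_sq hf]
    push_cast
    linarith

lemma integral_pathSum_pow_four_le {K : ℝ} (hH : IsHistoryProcess q H P)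
    (hf : ∀ L, stepMean q f L = 0) (hK : ∀ L a, |f L a| ≤ K) (n : ℕ) :
    ∫ ω, pathSum f (H n ω) ^ 4 ∂P ≤ 4 * K ^ 4 * n ^ 2 := by
  induction n with
  | zero => simp [hH.zero, pathSum]
  | succ n ih =>
    have hstep : ∫ ω, pathSum f (H (n + 1) ω) ^ 4 ∂P ≤
        ∫ ω, (pathSum f (H n ω) ^ 4 + 8 * K ^ 2 * pathSum f (H n ω) ^ 2 + 3 * K ^ 4) ∂P :=
      hH.integral_comp_succ_le n (Φ := fun L => pathSum f L ^ 4)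
        (Ψ := fun L => pathSum f L ^ 4 + 8 * K ^ 2 * pathSum f L ^ 2 + 3 * K ^ 4) fun ω =>
        stepMean_pathSum_cons_pow_four_le (hH.mem_stdSimplex _) (hf _) (hK _)
    have hint2 := hH.integrable_comp n fun L => 8 * K ^ 2 * pathSum f L ^ 2
    have hint4 := hH.integrable_comp n fun L => pathSum f L ^ 4
    have hint := hH.integrable_comp n fun L => pathSum f L ^ 4 + 8 * K ^ 2 * pathSum f L ^ 2
    rw [integral_add hint (integrable_const _), integral_add hint4 hint2,
      integral_const_mul, integral_const, probReal_univ, one_smul] at hstep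
    have hsq := mul_le_mul_of_nonneg_left (hH.integral_pathSum_sq_le hf hK n)
      (by positivity : 0 ≤ 8 * K ^ 2)
    have hK4 : 0 ≤ K ^ 4 := by positivity
    push_cast
    linarith

lemma le_integral_add_integral_succ {v : ℝ} {V : List α → ℝ} (hH : IsHistoryProcess q H P)
    (hV0 : ∀ L, 0 ≤ V L) (hV : ∀ L, v ≤ V L ∨ ∀ a, v ≤ V (a :: L)) (n : ℕ) :
    v ≤ ∫ ω, V (H n ω) ∂P + ∫ ω, V (H (n + 1) ω) ∂P := by
  rw [← integral_add (hH.integrable_comp n V) (hH.integrable_comp (n + 1) V)]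
  have hpair (ω : Ω) : v ≤ V (H n ω) + V (H (n + 1) ω) := by
    obtain ⟨a, ha⟩ := hH.succ n ω
    rcases hV (H n ω) with h | h
    · linarith [hV0 (H (n + 1) ω)]
    · linarith [hV0 (H n ω), ha ▸ h a]
  simpa using integral_mono (integrable_const v)
    ((hH.integrable_comp n V).add (hH.integrable_comp (n + 1) V)) hpair

lemma le_integral_pathSum_compensated_sq {v : ℝ} (hv : 0 ≤ v) (hH : IsHistoryProcess q H P)
    (hV : ∀ L, v ≤ stepVar q f L ∨ ∀ a, v ≤ stepVar q f (a :: L)) :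
    ∀ n : ℕ, v / 2 * (n - 1) ≤ ∫ ω, pathSum (compensated q f) (H n ω) ^ 2 ∂P
  | 0 => by
    have : 0 ≤ ∫ ω, pathSum (compensated q f) (H 0 ω) ^ 2 ∂P :=
      integral_nonneg fun ω => sq_nonneg _
    push_cast
    linarith
  | 1 => by simpa using integral_nonneg fun ω => sq_nonneg (pathSum (compensated q f) (H 1 ω))
  | n + 2 => by
    have ih := le_integral_pathSum_compensated_sq hv hH hV n
    have hmean (L : List α) := stepMean_compensated (f := f) (hH.mem_stdSimplex L)
    have hpair := hH.le_integral_add_integral_succ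
      (fun L => stepVar_nonneg (f := f) (hH.mem_stdSimplex L)) hV n
    rw [hH.integral_pathSum_succ_sq hmean, hH.integral_pathSum_succ_sq hmean]
    simp only [stepVar] at hpair
    push_cast
    linarith

/-- Truncating the martingale at `s * √n` compares its second moment with its first and fourth. -/
lemma le_integral_abs_pathSum_compensated {v K s : ℝ} (hv : 0 ≤ v) (hs : 0 < s)
    (hH : IsHistoryProcess q H P) (hK : ∀ L a, |f L a| ≤ K)
    (hV : ∀ L, v ≤ stepVar q f L ∨ ∀ a, v ≤ stepVar q f (a :: L)) {n : ℕ} (hn : 2 ≤ n) :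
    (v / 4 - 64 * K ^ 4 / s ^ 2) / s * √n ≤
      ∫ ω, |pathSum (compensated q f) (H n ω)| ∂P := by
  have hn' : (2 : ℝ) ≤ n := by exact_mod_cast hn
  have hsqrt : 0 < √(n : ℝ) := by positivity
  have hsq : √(n : ℝ) ^ 2 = n := Real.sq_sqrt (by positivity)
  have hsecond := le_integral_pathSum_compensated_sq hv hH hV n
  have hfourth := hH.integral_pathSum_pow_four_le
    (fun L => stepMean_compensated (f := f) (hH.mem_stdSimplex L))
    (fun L a => abs_compensated_le (hH.mem_stdSimplex L) (hK L) a) n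
  have htrunc := integral_sq_le_mul_integral_abs_add (mul_pos hs hsqrt)
    (hH.integrable_comp n (pathSum (compensated q f)))
    (hH.integrable_comp n fun L => pathSum (compensated q f) L ^ 2)
    (hH.integrable_comp n fun L => pathSum (compensated q f) L ^ 4)
  set m₁ := ∫ ω, |pathSum (compensated q f) (H n ω)| ∂P
  have hlinear : v / 4 * n - 64 * K ^ 4 * n / s ^ 2 ≤ s * √n * m₁ := by
    have hquot : (∫ ω, pathSum (compensated q f) (H n ω) ^ 4 ∂P) / (s * √n) ^ 2 ≤
        64 * K ^ 4 * n / s ^ 2 := by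
      rw [mul_pow, hsq, div_le_div_iff₀ (by positivity) (by positivity)]
      nlinarith [mul_le_mul_of_nonneg_right hfourth (sq_nonneg s)]
    nlinarith
  refine le_of_mul_le_mul_left ?_ (mul_pos hs hsqrt)
  calc s * √n * ((v / 4 - 64 * K ^ 4 / s ^ 2) / s * √n)
      = (v / 4 - 64 * K ^ 4 / s ^ 2) * √n ^ 2 := by field_simp
    _ = v / 4 * n - 64 * K ^ 4 * n / s ^ 2 := by rw [hsq]; ring
    _ ≤ s * √n * m₁ := hlinear

end ProbabilityMeasure

end IsHistoryProcess

end HistoryProcess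

section Reinforced

variable {α : Type*} [Fintype α] [DecidableEq α]

/-- The excess of the number of occurrences of `a` in `L` over the average `L.length / card α`. -/
def countDeviation (L : List α) (a : α) : ℝ := L.count a - L.length / Fintype.card α

/-- The law of the next letter when letters are reinforced linearly with strength `β`. At the empty
history, where the division by `0` yields `0`, it is the uniform law. -/
def reinforcedKernel (β : ℝ) (L : List α) (a : α) : ℝ :=
  1 / Fintype.card α + β * (countDeviation L a / L.length)

/-- The part of the conditional mean of `f` under `reinforcedKernel β` that is due to the
reinforcement, per unit of `β`. -/
def memoryDrift (f : List α → α → ℝ) (L : List α) : ℝ :=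
  ∑ a, countDeviation L a / L.length * f L a

lemma countDeviation_cons (L : List α) (a b : α) :
    countDeviation (a :: L) b =
      countDeviation L b + ((if a = b then 1 else 0) - 1 / Fintype.card α) := by
  simp only [countDeviation, List.count_cons, beq_iff_eq, List.length_cons]
  push_cast
  ring

lemma sum_countDeviation (L : List α) : ∑ a, countDeviation L a = 0 := by
  induction L with
  | nil => simp [countDeviation]
  | cons a L ih =>
    have : Nonempty α := ⟨a⟩
    have hcard : (Fintype.card α : ℝ) ≠ 0 := by positivity
    simp [countDeviation_cons, Finset.sum_add_distrib, ih, hcard]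

lemma abs_countDeviation_div_length_le (L : List α) (a : α) :
    |countDeviation L a / L.length| ≤ 1 := by
  have : Nonempty α := ⟨a⟩
  have hcard : (1 : ℝ) ≤ Fintype.card α := by exact_mod_cast Fintype.card_pos (α := α)
  have hcount : (L.count a : ℝ) ≤ L.length := by exact_mod_cast List.count_le_length
  have havg : (L.length : ℝ) / Fintype.card α ≤ L.length := div_le_self (by positivity) hcard
  have havg' : 0 ≤ (L.length : ℝ) / Fintype.card α := by positivity
  rw [abs_div, Nat.abs_cast]
  refine div_le_one_of_le₀ (abs_le.2 ⟨?_, ?_⟩) (by positivity) <;> unfold countDeviation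
  · linarith [(L.count a).cast_nonneg (α := ℝ)]
  · linarith

section Kernel

variable {β : ℝ}

lemma sub_abs_le_reinforcedKernel (β : ℝ) (L : List α) (a : α) :
    1 / Fintype.card α - |β| ≤ reinforcedKernel β L a := by
  have hdev : |β * (countDeviation L a / L.length)| ≤ |β| := by
    rw [abs_mul]
    exact mul_le_of_le_one_right (abs_nonneg β) (abs_countDeviation_div_length_le L a)
  rw [reinforcedKernel]
  linarith [neg_abs_le (β * (countDeviation L a / L.length))]

lemma reinforcedKernel_mem_stdSimplex [Nonempty α] (hβ : |β| ≤ 1 / Fintype.card α)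
    (L : List α) : reinforcedKernel β L ∈ stdSimplex ℝ α := by
  refine ⟨fun a => (sub_nonneg.2 hβ).trans (sub_abs_le_reinforcedKernel β L a), ?_⟩
  simp only [reinforcedKernel, Finset.sum_add_distrib, ← Finset.mul_sum, ← Finset.sum_div,
    sum_countDeviation]
  simp

lemma stepMean_reinforcedKernel (β : ℝ) (f : List α → α → ℝ) (L : List α) :
    stepMean (reinforcedKernel β) f L =
      (∑ a, f L a) / Fintype.card α + β * memoryDrift f L := by
  simp only [stepMean, memoryDrift, reinforcedKernel, Finset.mul_sum, Finset.sum_div,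
    ← Finset.sum_add_distrib]
  exact Finset.sum_congr rfl fun a _ => by ring

lemma memoryDrift_indicator_sub (L : List α) (b : α) :
    memoryDrift (fun _ a => (if a = b then 1 else 0) - 1 / Fintype.card α) L =
      countDeviation L b / L.length := by
  simp [memoryDrift, mul_sub, Finset.sum_sub_distrib, ← Finset.sum_mul, ← Finset.sum_div,
    sum_countDeviation]

lemma stepMean_indicator_sub (β : ℝ) (L : List α) (b : α) :
    stepMean (reinforcedKernel β) (fun _ a => (if a = b then 1 else 0) - 1 / Fintype.card α) L =
      β * (countDeviation L b / L.length) := by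
  have : Nonempty α := ⟨b⟩
  rw [stepMean_reinforcedKernel, memoryDrift_indicator_sub]
  simp

lemma stepMean_countDeviation_cons_sq_le (hβ : |β| ≤ 1 / Fintype.card α) (L : List α) (b : α) :
    stepMean (reinforcedKernel β) (fun L a => countDeviation (a :: L) b ^ 2) L ≤
      (1 + 2 * |β| / L.length) * countDeviation L b ^ 2 + 1 := by
  have : Nonempty α := ⟨b⟩
  set q : List α → α → ℝ := reinforcedKernel β
  set ξ : List α → α → ℝ := fun _ a => (if a = b then 1 else 0) - 1 / Fintype.card α with hξ
  set x := countDeviation L b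
  have hq : q L ∈ stdSimplex ℝ α := reinforcedKernel_mem_stdSimplex hβ L
  have hξ_sq (a : α) : ξ L a ^ 2 ≤ 1 := by
    have hinv : (Fintype.card α : ℝ)⁻¹ ≤ 1 := Nat.cast_inv_le_one _
    have hinv' : 0 ≤ (Fintype.card α : ℝ)⁻¹ := by positivity
    rw [sq_le_one_iff_abs_le_one, abs_le]
    simp only [hξ, one_div]
    split_ifs <;> constructor <;> linarith
  calc stepMean q (fun L a => countDeviation (a :: L) b ^ 2) L
      ≤ ∑ a, q L a * (x ^ 2 + 2 * x * ξ L a + 1) := by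
        refine Finset.sum_le_sum fun a _ => mul_le_mul_of_nonneg_left ?_ (hq.1 a)
        beta_reduce
        rw [countDeviation_cons, add_sq]
        gcongr
        exact hξ_sq a
    _ = (∑ a, q L a) * (x ^ 2 + 1) + 2 * x * stepMean q ξ L := by
        rw [stepMean, Finset.sum_mul, Finset.mul_sum, ← Finset.sum_add_distrib]
        exact Finset.sum_congr rfl fun a _ => by ring
    _ = (1 + 2 * β / L.length) * x ^ 2 + 1 := by
        rw [hq.2, stepMean_indicator_sub]
        ring
    _ ≤ (1 + 2 * |β| / L.length) * x ^ 2 + 1 := by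
        gcongr
        exact le_abs_self β

lemma pathSum_sub_eq_doob (β c : ℝ) (f : List α → α → ℝ) (L : List α) :
    pathSum (fun L a => f L a - c) L =
      pathSum (compensated (reinforcedKernel β) f) L
        + pathSum (fun L _ => (∑ a, f L a) / Fintype.card α - c) L
        + β * pathSum (fun L _ => memoryDrift f L) L := by
  induction L with
  | nil => simp [pathSum]
  | cons a L ih =>
    simp only [pathSum, compensated, stepMean_reinforcedKernel, ih]
    ring

end Kernel

namespace IsHistoryProcess

variable {Ω : Type*} [MeasurableSpace Ω] {P : Measure Ω} {β : ℝ}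
  {H : ℕ → Ω → List α} {f : List α → α → ℝ}

/-- The martingale part has mean zero, so half of its first absolute moment sits on the event that
it is positive, where the nonnegative uniform drift cannot cancel it. -/
lemma le_integral_abs_pathSum_sub {c : ℝ} [IsFiniteMeasure P]
    (hH : IsHistoryProcess (reinforcedKernel β) H P)
    (hc : ∀ L, c ≤ (∑ a, f L a) / Fintype.card α) (n : ℕ) :
    (∫ ω, |pathSum (compensated (reinforcedKernel β) f) (H n ω)| ∂P) / 2
        - |β| * ∫ ω, |pathSum (fun L _ => memoryDrift f L) (H n ω)| ∂P ≤
      ∫ ω, |pathSum (fun L a => f L a - c) (H n ω)| ∂P := by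
  set M := pathSum (compensated (reinforcedKernel β) f)
  set R := pathSum (fun L _ => memoryDrift f L)
  have hcentred : ∫ ω, M (H n ω) ∂P = 0 :=
    hH.integral_pathSum_eq_zero (fun L => stepMean_compensated (hH.mem_stdSimplex L)) n
  have hpointwise (ω : Ω) : |M (H n ω)| / 2 + M (H n ω) / 2 - |β| * |R (H n ω)| ≤
      |pathSum (fun L a => f L a - c) (H n ω)| := by
    have hroot := pathSum_nonneg (fun L (_ : α) => sub_nonneg.2 (hc L)) (H n ω)
    have hsplit := abs_add_self_sub_le (x := M (H n ω)) (r := β * R (H n ω)) hroot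
    rw [pathSum_sub_eq_doob β, ← abs_mul]
    linarith
  have hM := hH.integrable_comp n M
  have hM' := hH.integrable_comp n fun L => |M L| / 2 + M L / 2
  have hR := (hH.integrable_comp n R).abs.const_mul |β|
  have hmono := integral_mono (hM'.sub hR)
    (hH.integrable_comp n (pathSum fun L a => f L a - c)).abs hpointwise
  simp only [Pi.sub_apply] at hmono
  rw [integral_sub hM' hR, integral_add (hM.abs.div_const 2) (hM.div_const 2), integral_div,
    integral_div, integral_const_mul, hcentred] at hmono
  linarith

section ProbabilityMeasure

variable [IsProbabilityMeasure P]

lemma integral_countDeviation_sq_le (hH : IsHistoryProcess (reinforcedKernel β) H P)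
    (hβ : |β| ≤ 1 / Fintype.card α) (hβ' : |β| < 1 / 2) (b : α) (n : ℕ) :
    ∫ ω, countDeviation (H n ω) b ^ 2 ∂P ≤ n / (1 - 2 * |β|) := by
  have hpos : 0 < 1 - 2 * |β| := by linarith
  induction n with
  | zero => simp [hH.zero, countDeviation]
  | succ n ih =>
    have hstep : ∫ ω, countDeviation (H (n + 1) ω) b ^ 2 ∂P ≤
        ∫ ω, ((1 + 2 * |β| / n) * countDeviation (H n ω) b ^ 2 + 1) ∂P :=
      hH.integral_comp_succ_le n (Φ := fun L => countDeviation L b ^ 2)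
        (Ψ := fun L => (1 + 2 * |β| / n) * countDeviation L b ^ 2 + 1) fun ω => by
          simpa only [hH.length_eq] using stepMean_countDeviation_cons_sq_le hβ (H n ω) b
    rw [integral_add (hH.integrable_comp n fun L => (1 + 2 * |β| / n) * countDeviation L b ^ 2)
      (integrable_const _), integral_const_mul, integral_const, probReal_univ, one_smul] at hstep
    have hn : (n : ℝ) / n ≤ 1 := div_self_le_one _
    calc ∫ ω, countDeviation (H (n + 1) ω) b ^ 2 ∂P
        ≤ (1 + 2 * |β| / n) * (n / (1 - 2 * |β|)) + 1 := hstep.trans (by gcongr)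
      _ = (n + 2 * |β| * (n / n)) / (1 - 2 * |β|) + 1 := by ring
      _ ≤ (n + 2 * |β| * 1) / (1 - 2 * |β|) + 1 := by gcongr
      _ = ((n + 1 : ℕ) : ℝ) / (1 - 2 * |β|) := by
        push_cast
        field_simp
        ring

lemma integral_abs_countDeviation_div_le (hH : IsHistoryProcess (reinforcedKernel β) H P)
    (hβ : |β| ≤ 1 / Fintype.card α) (hβ' : |β| < 1 / 2) (b : α) (n : ℕ) :
    ∫ ω, |countDeviation (H n ω) b / n| ∂P ≤ (√n)⁻¹ / √(1 - 2 * |β|) := by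
  have hfirst := integral_abs_le_sqrt (hH.integrable_comp n fun L => countDeviation L b)
    (hH.integrable_comp n fun L => countDeviation L b ^ 2)
    (hH.integral_countDeviation_sq_le hβ hβ' b n)
  calc ∫ ω, |countDeviation (H n ω) b / n| ∂P
      = (∫ ω, |countDeviation (H n ω) b| ∂P) / n := by
        simp_rw [abs_div, Nat.abs_cast, integral_div]
    _ ≤ √(n / (1 - 2 * |β|)) / n := by gcongr
    _ = (√n)⁻¹ / √(1 - 2 * |β|) := by
        rw [Real.sqrt_div n.cast_nonneg, div_right_comm, Real.sqrt_div_self', one_div]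

lemma integral_abs_memoryDrift_le {K : ℝ} (hH : IsHistoryProcess (reinforcedKernel β) H P)
    (hβ : |β| ≤ 1 / Fintype.card α) (hβ' : |β| < 1 / 2) (hf : ∀ L a, |f L a| ≤ K) (n : ℕ) :
    ∫ ω, |memoryDrift f (H n ω)| ∂P ≤
      Fintype.card α * K / √(1 - 2 * |β|) * (√n)⁻¹ := by
  have hint (a : α) : Integrable (fun ω => |countDeviation (H n ω) a / n| * K) P :=
    (hH.integrable_comp n fun L => countDeviation L a / n).abs.mul_const K
  calc ∫ ω, |memoryDrift f (H n ω)| ∂P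
      ≤ ∫ ω, ∑ a, |countDeviation (H n ω) a / n| * K ∂P := by
        refine integral_mono (hH.integrable_comp n (memoryDrift f)).abs
          (integrable_finsetSum _ fun a _ => hint a) fun ω => ?_
        refine (Finset.abs_sum_le_sum_abs _ _).trans (Finset.sum_le_sum fun a _ => ?_)
        rw [hH.length_eq, abs_mul]
        exact mul_le_mul_of_nonneg_left (hf _ a) (abs_nonneg _)
    _ = ∑ a, (∫ ω, |countDeviation (H n ω) a / n| ∂P) * K := by
        rw [integral_finsetSum _ fun a _ => hint a]
        simp_rw [integral_mul_const]
    _ ≤ ∑ _a : α, (√n)⁻¹ / √(1 - 2 * |β|) * K := by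
        refine Finset.sum_le_sum fun a _ => mul_le_mul_of_nonneg_right
          (hH.integral_abs_countDeviation_div_le hβ hβ' a n) ((abs_nonneg (f [] a)).trans (hf _ a))
    _ = Fintype.card α * K / √(1 - 2 * |β|) * (√n)⁻¹ := by
        rw [Finset.sum_const, Finset.card_univ, nsmul_eq_mul]
        ring

lemma integral_abs_pathSum_memoryDrift_le {K : ℝ}
    (hH : IsHistoryProcess (reinforcedKernel β) H P) (hβ : |β| ≤ 1 / Fintype.card α)
    (hβ' : |β| < 1 / 2) (hK : 0 ≤ K) (hf : ∀ L a, |f L a| ≤ K) (n : ℕ) :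
    ∫ ω, |pathSum (fun L _ => memoryDrift f L) (H n ω)| ∂P ≤
      Fintype.card α * K / √(1 - 2 * |β|) * (2 * √n) :=
  calc ∫ ω, |pathSum (fun L _ => memoryDrift f L) (H n ω)| ∂P
      ≤ ∑ k ∈ Finset.range n, ∫ ω, |memoryDrift f (H k ω)| ∂P :=
        hH.integral_abs_pathSum_predictable_le _ n
    _ ≤ ∑ k ∈ Finset.range (n + 1), ∫ ω, |memoryDrift f (H k ω)| ∂P :=
        Finset.sum_le_sum_of_subset_of_nonneg (Finset.range_subset_range.2 n.le_succ)
          fun k _ _ => integral_nonneg fun ω => abs_nonneg _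
    _ ≤ ∑ k ∈ Finset.range (n + 1), Fintype.card α * K / √(1 - 2 * |β|) * (√k)⁻¹ :=
        Finset.sum_le_sum fun k _ => hH.integral_abs_memoryDrift_le hβ hβ' hf k
    _ ≤ Fintype.card α * K / √(1 - 2 * |β|) * (2 * √n) := by
        rw [← Finset.mul_sum]
        exact mul_le_mul_of_nonneg_left (sum_range_inv_sqrt_le n) (by positivity)

lemma sqrt_div_le_integral_abs_pathSum_sub {c : ℝ}
    (hH : IsHistoryProcess (reinforcedKernel β) H P) (hα : 2 ≤ Fintype.card α)
    (hβ : |β| ≤ 1 / (2048 * Fintype.card α ^ 3)) (hf : ∀ L a, |f L a| ≤ 1)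
    (hc : ∀ L, c ≤ (∑ a, f L a) / Fintype.card α)
    (hV : ∀ L, 1 / Fintype.card α ≤ stepVar (reinforcedKernel β) f L ∨
      ∀ a, 1 / Fintype.card α ≤ stepVar (reinforcedKernel β) f (a :: L)) {n : ℕ} (hn : 2 ≤ n) :
    √n / (512 * Fintype.card α ^ 2) ≤ ∫ ω, |pathSum (fun L a => f L a - c) (H n ω)| ∂P := by
  set d : ℝ := (Fintype.card α : ℝ)
  have hd : 2 ≤ d := Nat.ofNat_le_cast.2 hα
  have hβd : |β| ≤ 1 / d := hβ.trans (by gcongr; nlinarith [sq_nonneg d])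
  have hβ8 : |β| ≤ 3 / 8 := hβ.trans
    ((one_div_le_one_div_of_le (by norm_num) (by gcongr : 2048 * 2 ^ 3 ≤ 2048 * d ^ 3)).trans
      (by norm_num))
  have hmart : √n / (128 * d ^ 2) ≤
      ∫ ω, |pathSum (compensated (reinforcedKernel β) f) (H n ω)| ∂P := by
    -- At this `s` the fourth moment costs `64 / s ^ 2 = 1 / (4 * d ^ 2)`, half of `v / 4` or less.
    refine le_trans ?_ (hH.le_integral_abs_pathSum_compensated (v := 1 / d) (s := 16 * d)
      (by positivity) (by positivity) hf hV hn)
    have hconst : 1 / (128 * d ^ 2) ≤ (1 / d / 4 - 64 * 1 ^ 4 / (16 * d) ^ 2) / (16 * d) := by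
      rw [show (1 / d / 4 - 64 * 1 ^ 4 / (16 * d) ^ 2) / (16 * d) = (d - 1) / (64 * d ^ 3) by
        field_simp; ring, div_le_div_iff₀ (by positivity) (by positivity)]
      nlinarith [mul_le_mul_of_nonneg_right hd (sq_nonneg d)]
    calc √n / (128 * d ^ 2) = 1 / (128 * d ^ 2) * √n := by ring
      _ ≤ _ := by gcongr
  have hmemory : |β| * ∫ ω, |pathSum (fun L _ => memoryDrift f L) (H n ω)| ∂P ≤
      √n / (512 * d ^ 2) := by
    have hroot : 1 / 2 ≤ √(1 - 2 * |β|) := Real.le_sqrt_of_sq_le (by linarith)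
    calc |β| * ∫ ω, |pathSum (fun L _ => memoryDrift f L) (H n ω)| ∂P
        ≤ |β| * (d * 1 / √(1 - 2 * |β|) * (2 * √n)) := by
          gcongr
          exact hH.integral_abs_pathSum_memoryDrift_le hβd (by linarith) zero_le_one hf n
      _ ≤ 1 / (2048 * d ^ 3) * (d * 1 / (1 / 2) * (2 * √n)) := by gcongr
      _ = √n / (512 * d ^ 2) := by field_simp; ring
  have hhalf : √n / (128 * d ^ 2) / 2 = √n / (512 * d ^ 2) + √n / (512 * d ^ 2) := by ring
  linarith [hH.le_integral_abs_pathSum_sub hc n]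

end ProbabilityMeasure

end IsHistoryProcess

end Reinforced

section Tree

variable {V : Type*} {Γ : SimpleGraph V} {o x y z : V}

lemma exists_adj_dist_add_one_eq (hΓ : Γ.Connected) (hx : x ≠ o) :
    ∃ y, Γ.Adj x y ∧ Γ.dist o y + 1 = Γ.dist o x := by
  obtain ⟨w, hw⟩ := hΓ.exists_walk_length_eq_dist o x
  have hnil : ¬ w.Nil := SimpleGraph.Walk.not_nil_of_ne hx.symm
  have hadj : Γ.Adj x w.penultimate := (w.adj_penultimate hnil).symm
  refine ⟨w.penultimate, hadj, le_antisymm ?_ ?_⟩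
  · have hlast := SimpleGraph.dist_le w.dropLast
    have hlen := w.length_dropLast_add_one hnil
    omega
  · have htri := hΓ.dist_triangle (u := o) (v := w.penultimate) (w := x)
    rwa [SimpleGraph.dist_eq_one_iff_adj.2 hadj.symm] at htri

lemma eq_of_adj_of_dist_lt (hΓ : Γ.IsTree) (hxy : Γ.Adj x y) (hxz : Γ.Adj x z)
    (hy : Γ.dist o y < Γ.dist o x) (hz : Γ.dist o z < Γ.dist o x) : y = z := by
  classical
  obtain ⟨w, hw, -⟩ := hΓ.connected.exists_path_of_dist o x
  suffices h : ∀ {t}, Γ.Adj x t → Γ.dist o t < Γ.dist o x → t = w.penultimate by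
    rw [h hxy hy, h hxz hz]
  intro t hxt ht
  obtain ⟨u, hu, hlen⟩ := hΓ.connected.exists_path_of_dist o t
  have hx : x ∉ u.support := fun hx => by
    have hdist := SimpleGraph.dist_le (u.takeUntil x hx)
    have hle := u.length_takeUntil_le_length hx
    omega
  exact hΓ.isAcyclic.eq_penultimate_of_adj_end hw hxt
    (hΓ.isAcyclic.mem_support_of_ne_mem_support_of_adj_of_isPath hw hu hxt hx)

end Tree

section CayleyTree

variable {G : Type*} [Group G] {S : Finset G}

/-- The position reached from `1` by a word of generators whose head is the last step. -/
def wordPos (L : List S) : G := (L.map Subtype.val).prod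

/-- The change of the distance to `1` in the Cayley graph when the step `a` is taken after the
steps `L`. -/
def distIncrement (S : Finset G) (L : List S) (a : S) : ℝ :=
  (cayleyGraph S).dist 1 (wordPos (a :: L)) - (cayleyGraph S).dist 1 (wordPos L)

lemma wordPos_cons (a : S) (L : List S) : wordPos (a :: L) = a * wordPos L := by
  simp [wordPos]

lemma pathSum_distIncrement_sub (c : ℝ) (L : List S) :
    pathSum (fun L a => distIncrement S L a - c) L =
      (cayleyGraph S).dist 1 (wordPos L) - L.length * c := by
  induction L with
  | nil => simp [pathSum, wordPos]
  | cons a L ih =>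
    rw [pathSum, ih, distIncrement, List.length_cons]
    push_cast
    ring

lemma cayleyGraph_adj_mul (h1 : (1 : G) ∉ S) (a : S) (x : G) :
    (cayleyGraph S).Adj x (a * x) :=
  ⟨fun h => h1 (right_eq_mul.1 h ▸ a.2), Or.inl (by simp)⟩

lemma exists_eq_mul_of_cayleyGraph_adj (hS : ∀ s ∈ S, s⁻¹ ∈ S) {x y : G}
    (hxy : (cayleyGraph S).Adj x y) : ∃ a : S, y = a * x := by
  refine ⟨⟨y * x⁻¹, hxy.2.elim id fun h => ?_⟩, by simp⟩
  simpa using hS _ h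

lemma distIncrement_eq_one_or (h1 : (1 : G) ∉ S) (hT : (cayleyGraph S).IsTree) (L : List S)
    (a : S) : distIncrement S L a = 1 ∨ distIncrement S L a = -1 := by
  rw [distIncrement, wordPos_cons]
  rcases hT.dist_eq_dist_add_one_of_adj 1 (cayleyGraph_adj_mul h1 a (wordPos L)) with h | h
  · right; rw [h]; push_cast; ring
  · left; rw [h]; push_cast; ring

lemma abs_distIncrement_le_one (h1 : (1 : G) ∉ S) (hT : (cayleyGraph S).IsTree) (L : List S)
    (a : S) : |distIncrement S L a| ≤ 1 := by
  rcases distIncrement_eq_one_or h1 hT L a with h | h <;> simp [h]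

lemma eq_of_distIncrement_eq_neg_one (h1 : (1 : G) ∉ S) (hT : (cayleyGraph S).IsTree)
    {L : List S} {a b : S} (ha : distIncrement S L a = -1) (hb : distIncrement S L b = -1) :
    a = b := by
  have hcloser {c : S} (hc : distIncrement S L c = -1) :
      (cayleyGraph S).dist 1 (c * wordPos L) < (cayleyGraph S).dist 1 (wordPos L) := by
    rw [distIncrement, wordPos_cons] at hc
    exact_mod_cast (by linarith : ((cayleyGraph S).dist 1 (c * wordPos L) : ℝ) <
      (cayleyGraph S).dist 1 (wordPos L))
  exact Subtype.ext (mul_right_cancel (eq_of_adj_of_dist_lt hT (cayleyGraph_adj_mul h1 a _)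
    (cayleyGraph_adj_mul h1 b _) (hcloser ha) (hcloser hb)))

lemma card_sub_two_le_sum_distIncrement (h1 : (1 : G) ∉ S) (hT : (cayleyGraph S).IsTree)
    (L : List S) : (Fintype.card S : ℝ) - 2 ≤ ∑ a, distIncrement S L a := by
  classical
  have hvalue (a : S) : distIncrement S L a = 1 - if distIncrement S L a = -1 then 2 else 0 := by
    rcases distIncrement_eq_one_or h1 hT L a with h | h <;> norm_num [h]
  have hunique : (Finset.univ.filter fun a => distIncrement S L a = -1).card ≤ 1 :=
    Finset.card_le_one.2 fun a ha b hb => eq_of_distIncrement_eq_neg_one h1 hT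
      (Finset.mem_filter.1 ha).2 (Finset.mem_filter.1 hb).2
  have hunique' : ((Finset.univ.filter fun a => distIncrement S L a = -1).card : ℝ) ≤ 1 := by
    exact_mod_cast hunique
  rw [Finset.sum_congr rfl fun a _ => hvalue a, Finset.sum_sub_distrib, ← Finset.sum_filter,
    Finset.sum_const, Finset.sum_const, nsmul_eq_mul, nsmul_eq_mul, Finset.card_univ]
  linarith

lemma exists_distIncrement_eq_neg_one (hS : ∀ s ∈ S, s⁻¹ ∈ S) (hT : (cayleyGraph S).IsTree)
    {L : List S} (hL : wordPos L ≠ 1) : ∃ b, distIncrement S L b = -1 := by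
  obtain ⟨y, hadj, hdist⟩ := exists_adj_dist_add_one_eq hT.connected hL
  obtain ⟨b, rfl⟩ := exists_eq_mul_of_cayleyGraph_adj hS hadj
  refine ⟨b, ?_⟩
  rw [distIncrement, wordPos_cons, ← hdist]
  push_cast
  ring

section StepVar

variable [DecidableEq G] {β : ℝ}

lemma one_div_card_le_stepVar_distIncrement (hS : ∀ s ∈ S, s⁻¹ ∈ S) (h1 : (1 : G) ∉ S)
    (hT : (cayleyGraph S).IsTree) (hcard : 2 ≤ Fintype.card S)
    (hβ : |β| ≤ 1 / (2 * Fintype.card S)) {L : List S} (hL : wordPos L ≠ 1) :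
    1 / Fintype.card S ≤ stepVar (reinforcedKernel β) (distIncrement S) L := by
  obtain ⟨b, hb⟩ := exists_distIncrement_eq_neg_one hS hT hL
  obtain ⟨a, hab⟩ := Fintype.exists_ne_of_one_lt_card hcard b
  have ha : distIncrement S L a = 1 := (distIncrement_eq_one_or h1 hT L a).resolve_right
    fun ha => hab (eq_of_distIncrement_eq_neg_one h1 hT ha hb)
  have : Nonempty S := ⟨b⟩
  have hsplit : 1 / (Fintype.card S : ℝ) = 2 * (1 / (2 * Fintype.card S)) := by field_simp
  have hpos : 0 ≤ 1 / (2 * (Fintype.card S : ℝ)) := by positivity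
  have hkernel (c : S) : 1 / (2 * (Fintype.card S : ℝ)) ≤ reinforcedKernel β L c := by
    linarith [sub_abs_le_reinforcedKernel β L c]
  rw [hsplit]
  exact two_mul_le_stepVar (reinforcedKernel_mem_stdSimplex (by linarith) L) hpos
    (hkernel a) (hkernel b) ha hb

/-- The variance degenerates only at the root, which the walk leaves at the next step. -/
lemma one_div_card_le_stepVar_distIncrement_or (hS : ∀ s ∈ S, s⁻¹ ∈ S) (h1 : (1 : G) ∉ S)
    (hT : (cayleyGraph S).IsTree) (hcard : 2 ≤ Fintype.card S)
    (hβ : |β| ≤ 1 / (2 * Fintype.card S)) (L : List S) :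
    1 / Fintype.card S ≤ stepVar (reinforcedKernel β) (distIncrement S) L ∨
      ∀ a, 1 / Fintype.card S ≤ stepVar (reinforcedKernel β) (distIncrement S) (a :: L) := by
  by_cases hL : wordPos L = 1
  · refine Or.inr fun a => one_div_card_le_stepVar_distIncrement hS h1 hT hcard hβ fun ha => h1 ?_
    rw [wordPos_cons, hL, mul_one] at ha
    exact ha ▸ a.2
  · exact Or.inl (one_div_card_le_stepVar_distIncrement hS h1 hT hcard hβ hL)

end StepVar

end CayleyTree

/-- The strength `β` of the linear reinforcement felt by the elephant random walk with memory
parameter `p` on the `d`-regular tree; it vanishes at `p = 1 / d`. -/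
def reinforcementStrength (d : ℕ) (p : ℝ) : ℝ := (p * d - 1) / (d - 1)

lemma abs_reinforcementStrength_le {d : ℕ} (hd : 2 ≤ d) {p ε : ℝ} (hp : |p - 1 / d| ≤ ε) :
    |reinforcementStrength d p| ≤ 2 * ε := by
  have hd2 : (2 : ℝ) ≤ d := by exact_mod_cast hd
  have hd1 : (d : ℝ) - 1 ≠ 0 := by linarith
  have hratio : (d : ℝ) / (d - 1) ≤ 2 := by
    rw [div_le_iff₀ (by linarith)]
    linarith
  have hratio' : (0 : ℝ) ≤ d / (d - 1) := div_nonneg (by linarith) (by linarith)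
  calc |reinforcementStrength d p| = |(p - 1 / d) * (d / (d - 1))| := by
        rw [reinforcementStrength]
        congr 1
        field_simp
    _ = d / (d - 1) * |p - 1 / d| := by rw [abs_mul, abs_of_nonneg hratio', mul_comm]
    _ ≤ 2 * ε := by gcongr

namespace ERW

variable {G : Type*} [Group G] [DecidableEq G] {d : ℕ} {p : ℝ}
  {Ω : Type*} [MeasurableSpace Ω] {P : Measure Ω}

/-- The word of the first `n` steps of the walk, most recent step first. -/
def history (E : ERW G d p Ω P) : ℕ → Ω → List E.S
  | 0, _ => []
  | n + 1, ω => ⟨E.g (n + 1) ω, E.mem_S _ n.succ_pos ω⟩ :: E.history n ω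

lemma wordPos_history (E : ERW G d p Ω P) (n : ℕ) (ω : Ω) :
    wordPos (E.history n ω) = E.pos n ω := by
  induction n with
  | zero => rfl
  | succ n ih => rw [history, wordPos_cons, ih, pos]

lemma length_history (E : ERW G d p Ω P) (n : ℕ) (ω : Ω) : (E.history n ω).length = n := by
  induction n with
  | zero => rfl
  | succ n ih => rw [history, List.length_cons, ih]

lemma countDeviation_history (E : ERW G d p Ω P) (n : ℕ) (ω : Ω) (a : E.S) :
    countDeviation (E.history n ω) a = E.count a n ω - n / d := by
  have hcard : Fintype.card E.S = d := by rw [Fintype.card_coe, E.card_S]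
  induction n with
  | zero => simp [history, count, countDeviation]
  | succ n ih =>
    rw [history, countDeviation_cons, ih, hcard, count, count,
      ← Finset.insert_Icc_right_eq_Icc_add_one (by omega), Finset.filter_insert]
    by_cases h : E.g (n + 1) ω = a
    · rw [if_pos h, if_pos (Subtype.ext h), Finset.card_insert_of_notMem (by simp)]
      push_cast
      ring
    · rw [if_neg h, if_neg (h ∘ congrArg Subtype.val)]
      push_cast
      ring

lemma history_eq_iff (E : ERW G d p Ω P) (n : ℕ) (ω ω₀ : Ω) :
    E.history n ω = E.history n ω₀ ↔ ∀ k ∈ Finset.Icc 1 n, E.g k ω = E.g k ω₀ := by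
  induction n with
  | zero => simp [history]
  | succ n ih =>
    rw [← Finset.insert_Icc_right_eq_Icc_add_one (by omega), Finset.forall_mem_insert, ← ih]
    simp [history]

lemma setOf_history_succ_eq (E : ERW G d p Ω P) (n : ℕ) (a : E.S) (L : List E.S) :
    {ω | E.history (n + 1) ω = a :: L} =
      {ω | E.history n ω = L} ∩ {ω | E.g (n + 1) ω = a} := by
  ext ω
  simp [history, Subtype.ext_iff, and_comm]

lemma measurableSet_history_eq (E : ERW G d p Ω P) (n : ℕ) (L : List E.S) :
    MeasurableSet {ω | E.history n ω = L} := by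
  induction n generalizing L with
  | zero => simp only [history, MeasurableSet.const]
  | succ n ih =>
    cases L with
    | nil => simp [history]
    | cons a L =>
      rw [setOf_history_succ_eq]
      exact (ih L).inter (E.meas_g _ a)

/-- `p * 1{g = a} + (1 - p) / (d - 1) * 1{g ≠ a} = 1 / d + β * (1{g = a} - 1 / d)`, averaged over
the past steps `g`. -/
lemma reinforcedKernel_history (E : ERW G d p Ω P) (hd : 2 ≤ d) {n : ℕ} (hn : 1 ≤ n) (ω : Ω)
    (a : E.S) :
    reinforcedKernel (reinforcementStrength d p) (E.history n ω) a =
      p * ((E.count a n ω : ℝ) / n) + (1 - p) / (d - 1) * ((n - E.count a n ω) / n) := by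
  have hd2 : (2 : ℝ) ≤ d := by exact_mod_cast hd
  have hd1 : (d : ℝ) - 1 ≠ 0 := by linarith
  have hn0 : (n : ℝ) ≠ 0 := by positivity
  rw [reinforcedKernel, reinforcementStrength, countDeviation_history, length_history,
    Fintype.card_coe, E.card_S]
  field_simp
  ring

lemma measureReal_history_succ (E : ERW G d p Ω P) [IsProbabilityMeasure P] (hd : 2 ≤ d) (n : ℕ)
    (a : E.S) (L : List E.S) :
    P.real {ω | E.history (n + 1) ω = a :: L} =
      reinforcedKernel (reinforcementStrength d p) L a * P.real {ω | E.history n ω = L} := by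
  rw [setOf_history_succ_eq]
  rcases Set.eq_empty_or_nonempty {ω | E.history n ω = L} with hempty | ⟨ω₀, rfl⟩
  · simp [hempty]
  rcases Nat.eq_zero_or_pos n with rfl | hn
  · have hinit : P.real {ω | E.g 1 ω = a} = 1 / d := E.init a a.2
    simp [history, reinforcedKernel, E.card_S, hinit]
  · rw [reinforcedKernel_history E hd hn]
    simp only [history_eq_iff]
    exact E.update n hn (fun k => E.g k ω₀) a a.2

lemma isHistoryProcess_history (E : ERW G d p Ω P) [IsProbabilityMeasure P] (hd : 2 ≤ d)
    (hβ : |reinforcementStrength d p| ≤ 1 / d) :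
    IsHistoryProcess (reinforcedKernel (reinforcementStrength d p)) E.history P where
  mem_stdSimplex L := by
    have hcard : Fintype.card E.S = d := by rw [Fintype.card_coe, E.card_S]
    have : Nonempty E.S := Fintype.card_pos_iff.1 (by omega)
    exact reinforcedKernel_mem_stdSimplex (by rwa [hcard]) L
  measurableSet_eq := E.measurableSet_history_eq
  zero _ := rfl
  succ _ _ := ⟨_, rfl⟩
  transition := E.measureReal_history_succ hd

lemma dist_eq_dist_wordPos_history (E : ERW G d p Ω P) (n : ℕ) (ω : Ω) :
    E.dist n ω = (cayleyGraph E.S).dist 1 (wordPos (E.history n ω)) := by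
  rw [wordPos_history, dist]

lemma integrable_comp_dist (E : ERW G d p Ω P) [IsFiniteMeasure P] (n : ℕ) (Φ : ℕ → ℝ) :
    Integrable (fun ω => Φ (E.dist n ω)) P := by
  have hfin : (Set.range (E.history n)).Finite :=
    (List.finite_length_eq E.S n).subset (Set.range_subset_iff.2 (E.length_history n))
  simp only [dist_eq_dist_wordPos_history]
  exact integrable_comp_of_finite_range (E.measurableSet_history_eq n) hfin
    fun L => Φ ((cayleyGraph E.S).dist 1 (wordPos L))

lemma dist_one (E : ERW G d p Ω P) (ω : Ω) : E.dist 1 ω = 1 :=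
  SimpleGraph.dist_eq_one_iff_adj.2
    (cayleyGraph_adj_mul E.one_not_mem ⟨E.g 1 ω, E.mem_S 1 le_rfl ω⟩ 1)

lemma sqrt_div_le_integral_abs_dist_sub (E : ERW G d p Ω P) [IsProbabilityMeasure P]
    (hd : 2 ≤ d) (hβ : |reinforcementStrength d p| ≤ 1 / (2048 * d ^ 3)) {n : ℕ} (hn : 1 ≤ n) :
    √n / (512 * d ^ 2) ≤ ∫ ω, |(E.dist n ω : ℝ) - n * ((d - 2) / d)| ∂P := by
  have hd2 : (2 : ℝ) ≤ d := by exact_mod_cast hd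
  have hcard : Fintype.card E.S = d := by rw [Fintype.card_coe, E.card_S]
  obtain rfl | hn2 := hn.eq_or_lt
  · have hdev : (1 : ℝ) - (d - 2) / d = 2 / d := by field_simp; ring
    have hpos : 0 ≤ 2 / (d : ℝ) := by positivity
    simp only [dist_one, Nat.cast_one, one_mul, hdev, integral_const, probReal_univ, one_smul,
      Real.sqrt_one, abs_of_nonneg hpos]
    gcongr
    · norm_num
    · nlinarith
  · have hβ2 : |reinforcementStrength d p| ≤ 1 / (2 * d) := hβ.trans (by
      gcongr
      · norm_num
      · exact le_self_pow₀ (by linarith) (by norm_num))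
    have hH := E.isHistoryProcess_history hd (hβ2.trans (by gcongr; linarith))
    have hbound := hH.sqrt_div_le_integral_abs_pathSum_sub (f := distIncrement E.S)
      (c := (d - 2) / d) (by omega) (by rwa [hcard])
      (abs_distIncrement_le_one E.one_not_mem E.tree)
      (fun L => by
        rw [hcard]
        gcongr
        simpa only [hcard] using card_sub_two_le_sum_distIncrement E.one_not_mem E.tree L)
      (one_div_card_le_stepVar_distIncrement_or E.symm_S E.one_not_mem E.tree (by omega)
        (by rwa [hcard])) hn2
    simpa only [pathSum_distIncrement_sub, ← dist_eq_dist_wordPos_history, length_history, hcard]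
      using hbound

end ERW

lemma div_sqrt_rpow_eq {t : ℝ} (ht : 0 ≤ t) (m : ℝ) (n : ℕ) :
    (t / √n) ^ m = t ^ m * (n : ℝ) ^ (-(m / 2)) := by
  rw [Real.div_rpow ht (Real.sqrt_nonneg _), Real.sqrt_eq_rpow, ← Real.rpow_mul n.cast_nonneg,
    Real.rpow_neg n.cast_nonneg, div_eq_mul_inv, one_div_mul_eq_div]

theorem erw_rate_lower_general
    {G : Type*} [Group G] [DecidableEq G] {Ω : Type*} [MeasurableSpace Ω]
    {P : Measure Ω} [IsProbabilityMeasure P] {d : ℕ} (hd : 2 ≤ d) {m : ℝ} (hm : 1 ≤ m)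
    {p : ℝ} (hp : |p - 1 / d| ≤ 1 / (4096 * d ^ 3)) (E : ERW G d p Ω P) {n : ℕ} (hn : 1 ≤ n) :
    (1 / (512 * d ^ 2)) ^ m * (n : ℝ) ^ (-(m / 2)) ≤
      ∫ ω, |(E.dist n ω : ℝ) / n - (d - 2) / d| ^ m ∂P := by
  have hβ := (abs_reinforcementStrength_le hd hp).trans_eq
    (by ring : 2 * (1 / (4096 * d ^ 3)) = 1 / (2048 * (d : ℝ) ^ 3))
  have hfirst : 1 / (512 * d ^ 2) / √n ≤ ∫ ω, |(E.dist n ω : ℝ) / n - (d - 2) / d| ∂P := by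
    have hn0 : (0 : ℝ) < n := by exact_mod_cast hn
    calc 1 / (512 * d ^ 2) / √n = √n / (512 * d ^ 2) / n := by
          rw [div_right_comm, ← Real.sqrt_div_self', div_right_comm]
      _ ≤ (∫ ω, |(E.dist n ω : ℝ) - n * ((d - 2) / d)| ∂P) / n := by
          gcongr
          exact E.sqrt_div_le_integral_abs_dist_sub hd hβ hn
      _ = _ := by
          rw [← integral_div]
          congr 1 with ω
          rw [← abs_of_pos hn0, ← abs_div, abs_of_pos hn0]
          congr 1
          field_simp
  calc (1 / (512 * d ^ 2)) ^ m * (n : ℝ) ^ (-(m / 2)) = (1 / (512 * d ^ 2) / √n) ^ m :=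
        (div_sqrt_rpow_eq (by positivity) m n).symm
    _ ≤ (∫ ω, |(E.dist n ω : ℝ) / n - (d - 2) / d| ∂P) ^ m := by gcongr
    _ ≤ _ := rpow_integral_abs_le hm (E.integrable_comp_dist n fun k => k / n - (d - 2) / d)
        (E.integrable_comp_dist n fun k => |(k : ℝ) / n - (d - 2) / d| ^ m)

/-- matching lower bound in a neighbourhood of `1/d`: for any
`m ∈ [1,2)` there is `ε > 0` such that for all memory parameters
`p ∈ (1/d - ε, 1/d + ε)` there is `c > 0` with
`E|Δ n / n - (d-2)/d|^m ≥ c * n^(-m/2)` for all `n ≥ 1`. -/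
theorem erw_rate_lower
    {G : Type*} [Group G] [DecidableEq G] {Ω : Type*} [MeasurableSpace Ω]
    {P : Measure Ω} [IsProbabilityMeasure P]
    (d : ℕ) (hd : 3 ≤ d) (m : ℝ) (hm1 : 1 ≤ m) (hm2 : m < 2) :
    ∃ ε : ℝ, 0 < ε ∧ ∀ p : ℝ, 1 / (d : ℝ) - ε < p → p < 1 / (d : ℝ) + ε →
      ∀ E : ERW G d p Ω P, ∃ c : ℝ, 0 < c ∧ ∀ n : ℕ, 1 ≤ n →
        c * (n : ℝ) ^ (-(m / 2)) ≤
          ∫ ω, |(E.dist n ω : ℝ) / n - ((d : ℝ) - 2) / d| ^ m ∂P := by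
  refine ⟨1 / (4096 * d ^ 3), by positivity, fun p hp₁ hp₂ E =>
    ⟨(1 / (512 * d ^ 2)) ^ m, by positivity, fun n hn => ?_⟩⟩
  exact erw_rate_lower_general (by omega) hm1 (abs_le.2 ⟨by linarith, by linarith⟩) E hn

end
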